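/- arXiv:1905.07765 — 2 statements merged into one kernel-verified Lean document; each statement's English description precedes it below -/
import Mathlib

section
/- Let N_n(s) = max of n i.i.d. discrete Pareto II random variables with parameter s > 0, so that P(N_n(s) ≤ k) = (k/(s+k))^n. Then for 0 < p < 1, E[(N_n(s))^{-p}] = Γ(p+1)/(s^p n^p) + (s-1) p Γ(p+2)/(2 s^{p+1} n^{p+1}) + R_n with |R_n| ≤ c(p,s) n^{-2} for some constant c(p,s) independent of n. -/
open MeasureTheory Real

/-!
Abel summation turns the moment into `∑ x ≥ 1, (x / (s + x)) ^ n * (x ^ (-p) - (x + 1) ^ (-p))`.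
Put `y = x + s / 2`. The midpoint rule is used three times. Applied to
`log (1 + s / x) = ∫ u in x..x + s, u⁻¹`, it gives `(x / (s + x)) ^ n ≈ exp (-(n * s / y))`.
Applied to `x ^ (-p) - (x + 1) ^ (-p) = p * ∫ u in x..x + 1, u ^ (-p - 1)` and combined with a
Taylor expansion at `y`, it gives
`p * y ^ (-p - 1) + p * (p + 1) * (s - 1) / 2 * y ^ (-p - 2)`. The summand is thus a combination
of two inverse gamma kernels at unit-spaced points `y`. Finally the midpoint rule replaces each sum
of kernels by the integral over `(0, ∞)`, a Gamma integral, and these two integrals are the two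
main terms. All errors are `O(n⁻²)` because
`r ^ m * exp (-(r / x))` is at most `m ! * x ^ m`: each factor `n⁻¹` costs one power of `x`,
and the error terms have two powers to spare.
-/

open Filter Asymptotics Set
open scoped Nat Topology

/-! ### The midpoint rule -/

lemma abs_sub_sub_deriv_mul_sub_le {f f' f'' : ℝ → ℝ} {S : Set ℝ} {M : ℝ} (hS : Convex ℝ S)
    (hf : ∀ x ∈ S, HasDerivAt f (f' x) x) (hf' : ∀ x ∈ S, HasDerivAt f' (f'' x) x)
    (hM : ∀ x ∈ S, |f'' x| ≤ M) {c x : ℝ} (hc : c ∈ S) (hx : x ∈ S) :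
    |f x - f c - f' c * (x - c)| ≤ M * (x - c) ^ 2 := by
  have hsub : uIcc c x ⊆ S := hS.ordConnected.uIcc_subset hc hx
  have hM₀ : 0 ≤ M := (abs_nonneg _).trans (hM c hc)
  have hslope : ∀ y ∈ uIcc c x, ‖f' y - f' c‖ ≤ M * |x - c| := fun y hy ↦ calc
    ‖f' y - f' c‖ ≤ M * ‖y - c‖ := hS.norm_image_sub_le_of_norm_hasDerivWithin_le
      (fun z hz ↦ (hf' z hz).hasDerivWithinAt) hM hc (hsub hy)
    _ ≤ M * |x - c| := by gcongr; exact abs_sub_left_of_mem_uIcc hy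
  have hdiff : ‖(f x - f' c * x) - (f c - f' c * c)‖ ≤ M * |x - c| * ‖x - c‖ :=
    (convex_uIcc c x).norm_image_sub_le_of_norm_hasDerivWithin_le
      (f := fun y ↦ f y - f' c * y) (f' := fun y ↦ f' y - f' c)
      (fun y hy ↦ ((hf y (hsub hy)).sub
        (by simpa using (hasDerivAt_id y).const_mul (f' c))).hasDerivWithinAt)
      hslope left_mem_uIcc right_mem_uIcc
  calc |f x - f c - f' c * (x - c)| = ‖(f x - f' c * x) - (f c - f' c * c)‖ := by
        rw [norm_eq_abs]; ring_nf
    _ ≤ M * |x - c| * ‖x - c‖ := hdiff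
    _ = M * (x - c) ^ 2 := by rw [norm_eq_abs, mul_assoc, abs_mul_abs_self, sq]

lemma abs_integral_sub_midpoint_le {f f' f'' : ℝ → ℝ} {a b M : ℝ} (hab : a ≤ b)
    (hf : ∀ x ∈ Icc a b, HasDerivAt f (f' x) x) (hf' : ∀ x ∈ Icc a b, HasDerivAt f' (f'' x) x)
    (hM : ∀ x ∈ Icc a b, |f'' x| ≤ M) :
    |(∫ x in a..b, f x) - (b - a) * f ((a + b) / 2)| ≤ M * (b - a) ^ 3 / 4 := by
  set c := (a + b) / 2 with hc
  have hcmem : c ∈ Icc a b := ⟨by linarith, by linarith⟩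
  have hM₀ : 0 ≤ M := (abs_nonneg _).trans (hM c hcmem)
  have hfint : IntervalIntegrable f volume a b := ContinuousOn.intervalIntegrable <| by
    rw [uIcc_of_le hab]
    exact fun x hx ↦ (hf x hx).continuousAt.continuousWithinAt
  have hlin : ∫ x in a..b, (f c + f' c * (x - c)) = (b - a) * f c := by
    rw [intervalIntegral.integral_add intervalIntegrable_const
      (Continuous.intervalIntegrable (by fun_prop) _ _)]
    simp only [intervalIntegral.integral_const, intervalIntegral.integral_const_mul,
      intervalIntegral.integral_sub intervalIntegral.intervalIntegrable_id
        intervalIntegrable_const, integral_id, smul_eq_mul, hc]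
    ring
  calc |(∫ x in a..b, f x) - (b - a) * f c|
      = ‖∫ x in a..b, (f x - (f c + f' c * (x - c)))‖ := by
        rw [intervalIntegral.integral_sub hfint
          (Continuous.intervalIntegrable (by fun_prop) _ _), hlin, norm_eq_abs]
    _ ≤ M * ((b - a) / 2) ^ 2 * |b - a| := by
        refine intervalIntegral.norm_integral_le_of_norm_le_const fun x hx ↦ ?_
        have hx : x ∈ Icc a b := Ioc_subset_Icc_self (uIoc_of_le hab ▸ hx)
        rw [norm_eq_abs, ← sub_sub]
        refine (abs_sub_sub_deriv_mul_sub_le (convex_Icc a b) hf hf' hM hcmem hx).trans ?_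
        gcongr M * ?_
        exact sq_le_sq' (by linarith [hx.1]) (by linarith [hx.2])
    _ = M * (b - a) ^ 3 / 4 := by rw [abs_of_nonneg (sub_nonneg.2 hab)]; ring

lemma hasSum_integral_Ioc_add_natCast {f : ℝ → ℝ} {a : ℝ} (hf : IntegrableOn f (Ioi a)) :
    HasSum (fun k : ℕ ↦ ∫ x in (a + k)..(a + k + 1), f x) (∫ x in Ioi a, f x) := by
  have hmono : Monotone fun k : ℕ ↦ a + k := fun i j hij ↦ by dsimp only; gcongr
  have hunion : ⋃ k : ℕ, Ioc (a + k) (a + (Order.succ k : ℕ)) = Ioi a := by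
    have hunbdd : ¬ BddAbove (range fun k : ℕ ↦ a + (k : ℝ)) :=
      not_bddAbove_of_tendsto_atTop (tendsto_const_nhds.add_atTop tendsto_natCast_atTop_atTop)
    rw [iUnion_Ioc_map_succ_eq_Ioi (fun k ↦ hmono k.zero_le) hunbdd, Nat.bot_eq_zero,
      Nat.cast_zero, add_zero]
  have hcells := hasSum_integral_iUnion (fun k : ℕ ↦ measurableSet_Ioc)
    hmono.pairwise_disjoint_on_Ioc_succ (hunion.symm ▸ hf)
  rw [hunion] at hcells
  refine hcells.congr_fun fun k ↦ ?_
  rw [intervalIntegral.integral_of_le (by linarith), Order.succ_eq_add_one, Nat.cast_add_one,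
    add_assoc]

lemma abs_sub_integral_Ioi_le_of_hasSum_midpoint {f f' f'' : ℝ → ℝ} {a S : ℝ} {B : ℕ → ℝ}
    (hf : ∀ x ∈ Ici a, HasDerivAt f (f' x) x) (hf' : ∀ x ∈ Ici a, HasDerivAt f' (f'' x) x)
    (hB : ∀ k : ℕ, ∀ x ∈ Icc (a + k) (a + k + 1), |f'' x| ≤ B k) (hBsum : Summable B)
    (hint : IntegrableOn f (Ioi a)) (hS : HasSum (fun k : ℕ ↦ f (a + k + 1 / 2)) S) :
    |S - ∫ x in Ioi a, f x| ≤ (∑' k, B k) / 4 := by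
  refine (hS.sub (hasSum_integral_Ioc_add_natCast hint)).norm_le_of_bounded
    (hBsum.hasSum.div_const 4) fun k ↦ ?_
  have hsub : Icc (a + k) (a + k + 1) ⊆ Ici a := fun x hx ↦
    (le_add_of_nonneg_right k.cast_nonneg).trans hx.1
  have hcell := abs_integral_sub_midpoint_le (le_add_of_nonneg_right zero_le_one)
    (fun x hx ↦ hf x (hsub hx)) (fun x hx ↦ hf' x (hsub hx)) (hB k)
  rw [norm_eq_abs, abs_sub_comm]
  convert hcell using 2
  · rw [add_sub_cancel_left, one_mul]
    ring_nf
  · ring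

/-! ### Real powers -/

lemma summable_add_natCast_rpow {a b : ℝ} (ha : 0 < a) (hb : b < -1) :
    Summable fun k : ℕ ↦ (a + k) ^ b := by
  refine ((summable_one_div_nat_add_rpow a (-b)).2 (by linarith)).congr fun k ↦ ?_
  rw [abs_of_pos (by positivity), rpow_neg (by positivity), one_div, inv_inv, add_comm]

section rpow

variable {q x : ℝ}

lemma hasDerivAt_const_mul_rpow (c : ℝ) (hx : 0 < x) :
    HasDerivAt (fun y ↦ c * y ^ q) (c * (q * x ^ (q - 1))) x :=
  (hasDerivAt_rpow_const (Or.inl hx.ne')).const_mul c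

lemma abs_deriv_deriv_rpow_le {y : ℝ} (hq : q ≤ 2) (hx : 0 < x) (hxy : x ≤ y) :
    |q * ((q - 1) * y ^ (q - 1 - 1))| ≤ |q * (q - 1)| * x ^ (q - 2) := by
  rw [← mul_assoc, abs_mul, sub_sub, one_add_one_eq_two,
    abs_of_pos (rpow_pos_of_pos (hx.trans_le hxy) _)]
  gcongr ?_ * ?_
  exact rpow_le_rpow_of_nonpos hx hxy (by linarith)

lemma abs_rpow_sub_sub_mul_le {u v : ℝ} (hq : q ≤ 2) (hx : 0 < x) (hu : x ≤ u) (hv : x ≤ v) :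
    |u ^ q - v ^ q - q * v ^ (q - 1) * (u - v)| ≤ |q * (q - 1)| * x ^ (q - 2) * (u - v) ^ 2 :=
  abs_sub_sub_deriv_mul_sub_le (convex_Ici x)
    (fun _ hy ↦ hasDerivAt_rpow_const (Or.inl (hx.trans_le hy).ne'))
    (fun _ hy ↦ hasDerivAt_const_mul_rpow q (hx.trans_le hy))
    (fun _ hy ↦ abs_deriv_deriv_rpow_le hq hx hy) hv hu

lemma abs_integral_rpow_sub_midpoint_le {b : ℝ} (hq : q ≤ 2) (hx : 0 < x) (hxb : x ≤ b) :
    |(∫ y in x..b, y ^ q) - (b - x) * ((x + b) / 2) ^ q| ≤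
      |q * (q - 1)| * x ^ (q - 2) * (b - x) ^ 3 / 4 :=
  abs_integral_sub_midpoint_le hxb
    (fun _ hy ↦ hasDerivAt_rpow_const (Or.inl (hx.trans_le hy.1).ne'))
    (fun _ hy ↦ hasDerivAt_const_mul_rpow q (hx.trans_le hy.1))
    (fun _ hy ↦ abs_deriv_deriv_rpow_le hq hx hy.1)

end rpow

/-! ### The inverse gamma kernel -/

/-- The density of the inverse gamma distribution of shape `a` and scale `r`, up to the
normalising factor `r ^ a / Γ(a)`. -/
noncomputable def invGammaKernel (a r x : ℝ) : ℝ := x ^ (-a - 1) * exp (-(r / x))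

namespace invGammaKernel

variable {a r x : ℝ}

lemma nonneg (hx : 0 ≤ x) : 0 ≤ invGammaKernel a r x :=
  mul_nonneg (rpow_nonneg hx _) (exp_pos _).le

lemma pow_mul_le (m : ℕ) (hr : 0 < r) (hx : 0 < x) :
    r ^ m * invGammaKernel a r x ≤ m ! * x ^ (m - a - 1) := by
  have hexp : (r / x) ^ m * exp (-(r / x)) ≤ m ! := by
    have := pow_div_factorial_le_exp (r / x) (div_pos hr hx).le m
    rwa [div_le_comm₀ (by positivity) (exp_pos _), div_eq_mul_inv, ← exp_neg] at this
  calc r ^ m * invGammaKernel a r x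
      = ((r / x) ^ m * exp (-(r / x))) * (x ^ (m : ℝ) * x ^ (-a - 1)) := by
        rw [invGammaKernel, rpow_natCast, div_pow]
        field_simp
    _ ≤ m ! * (x ^ (m : ℝ) * x ^ (-a - 1)) := by gcongr
    _ = m ! * x ^ (m - a - 1) := by rw [← rpow_add hx]; ring_nf

lemma add_natCast_le (m : ℕ) (hr : 0 < r) (hx : 0 < x) :
    invGammaKernel (a + m) r x ≤ m ! / r ^ m * x ^ (-a - 1) := by
  rw [div_mul_eq_mul_div, le_div_iff₀' (by positivity)]
  refine (pow_mul_le m hr hx).trans_eq ?_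
  ring_nf

lemma hasDerivAt (hx : 0 < x) :
    HasDerivAt (invGammaKernel a r)
      (-(a + 1) * invGammaKernel (a + 1) r x + r * invGammaKernel (a + 2) r x) x := by
  have hexp : HasDerivAt (fun y ↦ exp (-(r / y))) (exp (-(r / x)) * (r / x ^ 2)) x :=
    (((hasDerivAt_inv hx.ne').const_mul r).neg.congr_deriv (by field_simp)).exp
  refine ((hasDerivAt_rpow_const (Or.inl hx.ne')).mul hexp).congr_deriv ?_
  have hpow : x ^ (-(a + 2) - 1) = x ^ (-a - 1) / x ^ 2 := by
    rw [← rpow_sub_natCast hx.ne']; push_cast; ring_nf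
  rw [invGammaKernel, invGammaKernel, hpow, show -(a + 1) - 1 = -a - 1 - 1 by ring]
  ring

/-- The second derivative of `invGammaKernel a r` on `(0, ∞)`, which controls the error of the
midpoint rule. -/
noncomputable def secondDeriv (a r x : ℝ) : ℝ :=
  (a + 1) * (a + 2) * invGammaKernel (a + 2) r x
    - (2 * a + 4) * (r * invGammaKernel (a + 3) r x) + r ^ 2 * invGammaKernel (a + 4) r x

lemma hasDerivAt_secondDeriv (hx : 0 < x) :
    HasDerivAt (fun y ↦ -(a + 1) * invGammaKernel (a + 1) r y + r * invGammaKernel (a + 2) r y)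
      (secondDeriv a r x) x := by
  refine ((hasDerivAt hx).const_mul _).add ((hasDerivAt hx).const_mul _) |>.congr_deriv ?_
  rw [secondDeriv]
  ring_nf

lemma pow_mul_abs_secondDeriv_le (m : ℕ) (ha : 0 < a) (hr : 0 < r) (hx : 0 < x) :
    r ^ m * |secondDeriv a r x| ≤
      ((a + 1) * (a + 2) * m ! + (2 * a + 4) * (m + 1)! + (m + 2)!) * x ^ (m - a - 3) := by
  have hdecay {b : ℝ} (j : ℕ) (hb : b = a + 2 + j) :
      r ^ (m + j) * invGammaKernel b r x ≤ (m + j)! * x ^ (m - a - 3) := by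
    refine (pow_mul_le (m + j) hr hx).trans_eq ?_
    rw [hb]
    push_cast
    ring_nf
  have h₂ : r ^ m * invGammaKernel (a + 2) r x ≤ m ! * x ^ (m - a - 3) := hdecay 0 (by simp)
  have h₃ : r ^ (m + 1) * invGammaKernel (a + 3) r x ≤ (m + 1)! * x ^ (m - a - 3) :=
    hdecay 1 (by push_cast; ring)
  have h₄ : r ^ (m + 2) * invGammaKernel (a + 4) r x ≤ (m + 2)! * x ^ (m - a - 3) :=
    hdecay 2 (by push_cast; ring)
  have hK (b : ℝ) : 0 ≤ invGammaKernel b r x := nonneg hx.le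
  have hK₂ := hK (a + 2)
  have hK₃ := hK (a + 3)
  have hK₄ := hK (a + 4)
  calc r ^ m * |secondDeriv a r x|
      ≤ r ^ m * ((a + 1) * (a + 2) * invGammaKernel (a + 2) r x
        + (2 * a + 4) * (r * invGammaKernel (a + 3) r x)
        + r ^ 2 * invGammaKernel (a + 4) r x) := by
        gcongr
        refine (abs_add_le _ _).trans (add_le_add ((abs_sub _ _).trans_eq ?_) (le_of_eq ?_))
        · rw [abs_of_nonneg (by positivity), abs_of_nonneg (by positivity)]
        · exact abs_of_nonneg (by positivity)
    _ = (a + 1) * (a + 2) * (r ^ m * invGammaKernel (a + 2) r x)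
        + (2 * a + 4) * (r ^ (m + 1) * invGammaKernel (a + 3) r x)
        + r ^ (m + 2) * invGammaKernel (a + 4) r x := by ring
    _ ≤ (a + 1) * (a + 2) * (m ! * x ^ (m - a - 3))
        + (2 * a + 4) * ((m + 1)! * x ^ (m - a - 3)) + (m + 2)! * x ^ (m - a - 3) := by gcongr
    _ = _ := by ring

-- The left side has the shape in which `integral_comp_rpow_Ioi` presents the substitution `x⁻¹`.
lemma abs_mul_rpow_mul_gammaIntegrand_comp_inv (hx : 0 < x) :
    |(-1 : ℝ)| * x ^ ((-1 : ℝ) - 1) * ((x ^ (-1 : ℝ)) ^ (a - 1) * exp (-(r * x ^ (-1 : ℝ)))) =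
      invGammaKernel a r x := by
  rw [← rpow_mul hx.le, abs_neg, abs_one, one_mul, ← mul_assoc, ← rpow_add hx, rpow_neg_one,
    invGammaKernel, div_eq_mul_inv]
  ring_nf

lemma integrableOn_Ioi (ha : 0 < a) (hr : 0 < r) :
    IntegrableOn (invGammaKernel a r) (Ioi 0) := by
  have hGamma : IntegrableOn (fun t ↦ t ^ (a - 1) * exp (-(r * t))) (Ioi 0) := by
    simpa using integrableOn_rpow_mul_exp_neg_mul_rpow (s := a - 1) (by linarith) one_pos hr
  exact ((integrableOn_Ioi_comp_rpow_iff _ (p := -1) (by norm_num)).2 hGamma).congr_fun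
    (fun _ hx ↦ abs_mul_rpow_mul_gammaIntegrand_comp_inv hx) measurableSet_Ioi

lemma integral_Ioi (ha : 0 < a) (hr : 0 < r) :
    ∫ x in Ioi 0, invGammaKernel a r x = Gamma a * r ^ (-a) := calc
  ∫ x in Ioi 0, invGammaKernel a r x = ∫ t in Ioi 0, t ^ (a - 1) * exp (-(r * t)) := by
    rw [← integral_comp_rpow_Ioi (fun t ↦ t ^ (a - 1) * exp (-(r * t))) (p := -1) (by norm_num)]
    exact setIntegral_congr_fun measurableSet_Ioi
      fun _ hx ↦ (abs_mul_rpow_mul_gammaIntegrand_comp_inv hx).symm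
  _ = Gamma a * r ^ (-a) := by
    rw [integral_rpow_mul_exp_neg_mul_Ioi ha hr, mul_comm, one_div, inv_rpow hr.le,
      rpow_neg hr.le]

lemma summable {c : ℝ} (ha : 0 < a) (hr : 0 < r) (hc : 0 < c) :
    Summable fun k : ℕ ↦ invGammaKernel a r (c + k) := by
  refine (summable_add_natCast_rpow hc (by linarith : -a - 1 < -1)).of_nonneg_of_le
    (fun k ↦ nonneg (by positivity)) fun k ↦ ?_
  simpa using pow_mul_le (a := a) 0 hr (x := c + k) (by positivity)

lemma isBigO_integral_zero_right (a : ℝ) {δ : ℝ} (hδ : 0 ≤ δ) (m : ℕ) :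
    (fun r ↦ ∫ x in 0..δ, invGammaKernel a r x) =O[atTop] fun r ↦ (r ^ m)⁻¹ := by
  obtain ⟨j, hj⟩ := exists_nat_ge (a + 1)
  refine .of_bound ((m + j)! * δ ^ ((m + j : ℕ) - a - 1) * δ) ?_
  filter_upwards [eventually_ge_atTop 1] with r hr
  have hbound : ∀ x ∈ Ioc 0 δ,
      ‖invGammaKernel a r x‖ ≤ (m + j)! * δ ^ ((m + j : ℕ) - a - 1) * (r ^ m)⁻¹ := fun x hx ↦ by
    have hK : 0 ≤ invGammaKernel a r x := nonneg hx.1.le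
    have hexp : 0 ≤ ((m + j : ℕ) : ℝ) - a - 1 := by push_cast; linarith [m.cast_nonneg (α := ℝ)]
    rw [norm_of_nonneg hK, ← div_eq_mul_inv, le_div_iff₀ (by positivity), mul_comm]
    calc r ^ m * invGammaKernel a r x ≤ r ^ (m + j) * invGammaKernel a r x := by
          gcongr
          exact m.le_add_right j
      _ ≤ (m + j)! * x ^ ((m + j : ℕ) - a - 1) := pow_mul_le _ (by linarith) hx.1
      _ ≤ (m + j)! * δ ^ ((m + j : ℕ) - a - 1) := by gcongr; exacts [hx.1.le, hx.2]
  have hnorm := intervalIntegral.norm_integral_le_of_norm_le_const (uIoc_of_le hδ ▸ hbound)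
  refine hnorm.trans_eq ?_
  rw [sub_zero, abs_of_nonneg hδ, norm_of_nonneg (by positivity)]
  ring

lemma isBigO_tsum_sub_integral_Ioi {δ : ℝ} {m : ℕ} (ha : 0 < a) (hδ : 0 < δ) (hm : m < a + 2) :
    (fun r ↦ ∑' k : ℕ, invGammaKernel a r (δ + k + 1 / 2) - ∫ x in Ioi δ, invGammaKernel a r x)
      =O[atTop] fun r ↦ (r ^ m)⁻¹ := by
  set D : ℝ := (a + 1) * (a + 2) * m ! + (2 * a + 4) * (m + 1)! + (m + 2)!
  have hsum : Summable fun k : ℕ ↦ (δ + k) ^ (m - a - 3) :=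
    summable_add_natCast_rpow hδ (by linarith)
  refine .of_bound (D * (∑' k : ℕ, (δ + k) ^ (m - a - 3)) / 4) ?_
  filter_upwards [eventually_gt_atTop 0] with r hr
  have hcell (k : ℕ) : ∀ x ∈ Icc (δ + k) (δ + k + 1),
      |secondDeriv a r x| ≤ D * (r ^ m)⁻¹ * (δ + k) ^ (m - a - 3) := fun x hx ↦ by
    have hδk : 0 < δ + k := by positivity
    rw [mul_right_comm D, ← div_eq_mul_inv, le_div_iff₀ (by positivity), mul_comm]
    refine (pow_mul_abs_secondDeriv_le m ha hr (hδk.trans_le hx.1)).trans ?_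
    gcongr D * ?_
    exact rpow_le_rpow_of_nonpos hδk hx.1 (by linarith)
  have hmid : HasSum (fun k : ℕ ↦ invGammaKernel a r (δ + k + 1 / 2))
      (∑' k : ℕ, invGammaKernel a r (δ + k + 1 / 2)) := by
    simpa only [add_right_comm] using (summable ha hr (by positivity : 0 < δ + 1 / 2)).hasSum
  have hbound := abs_sub_integral_Ioi_le_of_hasSum_midpoint
    (fun x hx ↦ hasDerivAt (hδ.trans_le hx)) (fun x hx ↦ hasDerivAt_secondDeriv (hδ.trans_le hx))
    hcell (hsum.mul_left _) ((integrableOn_Ioi ha hr).mono_set (Ioi_subset_Ioi hδ.le)) hmid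
  refine hbound.trans_eq ?_
  rw [tsum_mul_left, norm_of_nonneg (by positivity)]
  ring

theorem isBigO_tsum_sub_Gamma {δ : ℝ} {m : ℕ} (ha : 0 < a) (hδ : 0 < δ) (hm : m < a + 2) :
    (fun r ↦ ∑' k : ℕ, invGammaKernel a r (δ + k + 1 / 2) - Gamma a * r ^ (-a))
      =O[atTop] fun r ↦ (r ^ m)⁻¹ := by
  refine ((isBigO_tsum_sub_integral_Ioi ha hδ hm).sub
    (isBigO_integral_zero_right a hδ.le m)).congr' ?_ .rfl
  filter_upwards [eventually_gt_atTop 0] with r hr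
  have hint := integrableOn_Ioi ha hr
  rw [← integral_Ioi ha hr, ← intervalIntegral.integral_interval_add_Ioi hint
    (hint.mono_set (Ioi_subset_Ioi hδ.le))]
  ring

end invGammaKernel

/-! ### Abel summands of a power of a discrete Pareto maximum -/

section Pareto

variable {p s t x : ℝ}

lemma abs_log_one_add_div_sub_le (hs : 0 ≤ s) (hx : 0 < x) :
    |log (1 + s / x) - s / (x + s / 2)| ≤ s ^ 3 / 2 * x ^ (-3 : ℝ) := by
  have hxs : 0 < x + s := by positivity
  have hint : ∫ y in x..x + s, y ^ (-1 : ℝ) = log (1 + s / x) := by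
    simp only [rpow_neg_one]
    rw [integral_inv_of_pos hx hxs, add_div, div_self hx.ne']
  have hmid := abs_integral_rpow_sub_midpoint_le (q := -1) (by norm_num) hx
    (le_add_of_nonneg_right hs)
  rw [hint, rpow_neg_one, add_sub_cancel_left, ← div_eq_mul_inv] at hmid
  norm_num at hmid ⊢
  convert hmid using 1
  · ring_nf
  · ring

lemma div_add_half_le_log_one_add_div (hs : 0 ≤ s) (hx : 0 < x) :
    s / (x + s / 2) ≤ log (1 + s / x) := by
  refine Eq.trans_le ?_ (le_log_one_add_of_nonneg (div_nonneg hs hx.le))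
  field_simp
  ring

lemma div_add_rpow_eq_exp (hs : 0 ≤ s) (hx : 0 < x) :
    (x / (s + x)) ^ t = exp (-(t * log (1 + s / x))) := by
  rw [rpow_def_of_pos (by positivity), ← inv_div, add_div, div_self hx.ne', log_inv, add_comm]
  ring_nf

lemma div_add_rpow_le_exp (hs : 0 ≤ s) (hx : 0 < x) (ht : 0 ≤ t) :
    (x / (s + x)) ^ t ≤ exp (-(t * s / (x + s / 2))) := by
  rw [div_add_rpow_eq_exp hs hx, mul_div_assoc]
  gcongr
  exact div_add_half_le_log_one_add_div hs hx

lemma abs_div_add_rpow_sub_exp_le (hs : 0 ≤ s) (hx : 0 < x) (ht : 0 ≤ t) :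
    |(x / (s + x)) ^ t - exp (-(t * s / (x + s / 2)))| ≤
      s ^ 3 / 2 * t * x ^ (-3 : ℝ) * exp (-(t * s / (x + s / 2))) := by
  set E := exp (-(t * s / (x + s / 2)))
  set d := log (1 + s / x) - s / (x + s / 2) with hd
  have hexp : exp (-(t * log (1 + s / x))) = E * exp (-(t * d)) := by
    rw [← exp_add, hd]
    ring_nf
  calc |(x / (s + x)) ^ t - E| = E - (x / (s + x)) ^ t := by
        rw [abs_sub_comm, abs_of_nonneg (sub_nonneg.2 (div_add_rpow_le_exp hs hx ht))]
    _ = E * (1 - exp (-(t * d))) := by rw [div_add_rpow_eq_exp hs hx, hexp, mul_one_sub]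
    _ ≤ E * (t * |d|) := by
        gcongr
        linarith [one_sub_le_exp_neg (t * d), mul_le_mul_of_nonneg_left (le_abs_self d) ht]
    _ ≤ E * (t * (s ^ 3 / 2 * x ^ (-3 : ℝ))) := by
        gcongr
        exact abs_log_one_add_div_sub_le hs hx
    _ = s ^ 3 / 2 * t * x ^ (-3 : ℝ) * E := by ring

lemma exp_neg_div_add_half_le (hs : 0 ≤ s) (ht : 0 ≤ t) (hx : 1 ≤ x) :
    exp (-(t * s / (x + s / 2))) ≤ exp (-(t * (s / (1 + s / 2)) / x)) := by
  rw [exp_le_exp, neg_le_neg_iff, ← mul_div_assoc, div_div]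
  gcongr
  nlinarith

/-- The two-term expansion of the increment `x ^ (-p) - (x + 1) ^ (-p)` around the point
`y = x + s / 2`. That centre is the one dictated by the distribution function
`(x / (s + x)) ^ t ≈ exp (-(t * s / y))`. -/
noncomputable def incrementExpansion (p s y : ℝ) : ℝ :=
  p * y ^ (-p - 1) + p * (p + 1) * (s - 1) / 2 * y ^ (-p - 2)

lemma abs_incrementExpansion_le (hp : 0 ≤ p) (hx : 1 ≤ x) :
    |incrementExpansion p s x| ≤ (p + p * (p + 1) * |s - 1| / 2) * x ^ (-p - 1) := by
  have : 0 < x := by linarith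
  have hpow : x ^ (-p - 2) ≤ x ^ (-p - 1) := rpow_le_rpow_of_exponent_le hx (by linarith)
  calc |incrementExpansion p s x|
      ≤ |p * x ^ (-p - 1)| + |p * (p + 1) * (s - 1) / 2 * x ^ (-p - 2)| := abs_add_le _ _
    _ = p * x ^ (-p - 1) + p * (p + 1) * |s - 1| / 2 * x ^ (-p - 2) := by
        rw [abs_of_nonneg (by positivity), abs_mul, abs_div, abs_mul,
          abs_of_nonneg (by positivity : 0 ≤ p * (p + 1)), abs_two,
          abs_of_nonneg (by positivity : 0 ≤ x ^ (-p - 2))]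
    _ ≤ p * x ^ (-p - 1) + p * (p + 1) * |s - 1| / 2 * x ^ (-p - 1) := by gcongr
    _ = _ := by ring

lemma rpow_neg_sub_rpow_neg_eq_integral (hp : p ≠ 0) (hx : 0 < x) :
    x ^ (-p) - (x + 1) ^ (-p) = p * ∫ y in x..x + 1, y ^ (-p - 1) := by
  have hmem : (0 : ℝ) ∉ uIcc x (x + 1) := by
    rw [uIcc_of_le (by linarith)]
    exact fun h ↦ hx.not_ge h.1
  rw [integral_rpow (Or.inr ⟨by simpa [sub_eq_iff_eq_add] using hp, hmem⟩), sub_add_cancel]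
  field_simp
  ring

lemma abs_increment_sub_incrementExpansion_le (hp : 0 < p) (hs : 0 ≤ s) (hx : 0 < x) :
    |x ^ (-p) - (x + 1) ^ (-p) - incrementExpansion p s (x + s / 2)| ≤
      p * (p + 1) * (p + 2) * (1 + (s - 1) ^ 2) / 4 * x ^ (-p - 3) := by
  set A := (∫ y in x..x + 1, y ^ (-p - 1)) - (x + 1 / 2) ^ (-p - 1) with hA
  set B := (x + 1 / 2) ^ (-p - 1) - (x + s / 2) ^ (-p - 1)
    - (-p - 1) * (x + s / 2) ^ (-p - 2) * ((1 - s) / 2) with hB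
  have hcoef : |(-p - 1) * (-p - 1 - 1)| = (p + 1) * (p + 2) := by
    rw [abs_of_nonneg (by nlinarith)]
    ring
  have hmid : |A| ≤ (p + 1) * (p + 2) * x ^ (-p - 3) / 4 := by
    have h := abs_integral_rpow_sub_midpoint_le (q := -p - 1) (by linarith) hx
      (le_add_of_nonneg_right zero_le_one)
    rw [hcoef, show (x + (x + 1)) / 2 = x + 1 / 2 by ring, show -p - 1 - 2 = -p - 3 by ring] at h
    simpa [hA] using h
  have htaylor : |B| ≤ (p + 1) * (p + 2) * x ^ (-p - 3) * ((1 - s) / 2) ^ 2 := by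
    have h := abs_rpow_sub_sub_mul_le (q := -p - 1) (u := x + 1 / 2) (v := x + s / 2)
      (by linarith) hx (by linarith) (by linarith)
    rwa [hcoef, show -p - 1 - 1 = -p - 2 by ring, show -p - 1 - 2 = -p - 3 by ring,
      show x + 1 / 2 - (x + s / 2) = (1 - s) / 2 by ring] at h
  have hsplit : x ^ (-p) - (x + 1) ^ (-p) - incrementExpansion p s (x + s / 2) = p * (A + B) := by
    rw [rpow_neg_sub_rpow_neg_eq_integral hp.ne' hx, incrementExpansion, hA, hB]
    ring
  calc |x ^ (-p) - (x + 1) ^ (-p) - incrementExpansion p s (x + s / 2)|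
      = p * |A + B| := by rw [hsplit, abs_mul, abs_of_pos hp]
    _ ≤ p * ((p + 1) * (p + 2) * x ^ (-p - 3) / 4
        + (p + 1) * (p + 2) * x ^ (-p - 3) * ((1 - s) / 2) ^ 2) := by
        gcongr
        exact (abs_add_le A B).trans (add_le_add hmid htaylor)
    _ = _ := by ring

/-- The summand `(x / (s + x)) ^ t * (x ^ (-p) - (x + 1) ^ (-p))` that Abel summation produces for
the moment of order `-p` of a discrete Pareto maximum. The sample size `t` is allowed to be any
real number. -/
noncomputable def abelSummand (p s t x : ℝ) : ℝ :=
  (x / (s + x)) ^ t * (x ^ (-p) - (x + 1) ^ (-p))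

/-- The approximation of `abelSummand p s t x` by inverse gamma kernels of scale `t * s`, evaluated
at `y = x + s / 2`. -/
noncomputable def abelKernel (p s t y : ℝ) : ℝ :=
  p * invGammaKernel p (t * s) y + p * (p + 1) * (s - 1) / 2 * invGammaKernel (p + 1) (t * s) y

lemma abelKernel_eq (p s t y : ℝ) :
    abelKernel p s t y = exp (-(t * s / y)) * incrementExpansion p s y := by
  rw [abelKernel, invGammaKernel, invGammaKernel, incrementExpansion,
    show -(p + 1) - 1 = -p - 2 by ring]
  ring

lemma abs_abelSummand_sub_abelKernel_le (hp : 0 < p) (hs : 0 ≤ s) (ht : 0 ≤ t) (hx : 1 ≤ x) :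
    |abelSummand p s t x - abelKernel p s t (x + s / 2)| ≤
      p * (p + 1) * (p + 2) * (1 + (s - 1) ^ 2) / 4
          * invGammaKernel (p + 2) (t * (s / (1 + s / 2))) x
        + s ^ 3 / 2 * (p + p * (p + 1) * |s - 1| / 2)
          * (t * invGammaKernel (p + 3) (t * (s / (1 + s / 2))) x) := by
  have hx₀ : 0 < x := by linarith
  set C₁ := p * (p + 1) * (p + 2) * (1 + (s - 1) ^ 2) / 4
  set C₂ := p + p * (p + 1) * |s - 1| / 2
  set F := (x / (s + x)) ^ t
  set E := exp (-(t * s / (x + s / 2)))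
  set G := exp (-(t * (s / (1 + s / 2)) / x))
  set w := x ^ (-p) - (x + 1) ^ (-p)
  set q := incrementExpansion p s (x + s / 2)
  have hF₀ : 0 ≤ F := by positivity
  have hEG : E ≤ G := exp_neg_div_add_half_le hs ht hx
  have hFG : F ≤ G := (div_add_rpow_le_exp hs hx₀ ht).trans hEG
  have hFE : |F - E| ≤ s ^ 3 / 2 * t * x ^ (-3 : ℝ) * G :=
    (abs_div_add_rpow_sub_exp_le hs hx₀ ht).trans (by gcongr)
  have hw : |w - q| ≤ C₁ * x ^ (-p - 3) := abs_increment_sub_incrementExpansion_le hp hs hx₀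
  have hq : |q| ≤ C₂ * x ^ (-p - 1) := by
    refine (abs_incrementExpansion_le hp.le (by linarith)).trans ?_
    gcongr C₂ * ?_
    exact rpow_le_rpow_of_nonpos hx₀ (by linarith) (by linarith)
  have hker : abelKernel p s t (x + s / 2) = E * q := abelKernel_eq p s t _
  calc |F * w - abelKernel p s t (x + s / 2)| = |F * (w - q) + (F - E) * q| := by
        rw [hker]
        ring_nf
    _ ≤ F * |w - q| + |F - E| * |q| := by
        refine (abs_add_le _ _).trans_eq ?_
        rw [abs_mul, abs_mul, abs_of_nonneg hF₀]
    _ ≤ G * (C₁ * x ^ (-p - 3)) + s ^ 3 / 2 * t * x ^ (-3 : ℝ) * G * (C₂ * x ^ (-p - 1)) := by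
        gcongr
    _ = C₁ * (x ^ (-p - 3) * G) + s ^ 3 / 2 * C₂ * (t * (x ^ (-3 + (-p - 1)) * G)) := by
        rw [rpow_add hx₀]
        ring
    _ = _ := by
        rw [invGammaKernel, invGammaKernel, show -(p + 2) - 1 = -p - 3 by ring,
          show -(p + 3) - 1 = -3 + (-p - 1) by ring]

lemma exists_abs_abelSummand_sub_abelKernel_le_rpow (hp : 0 < p) (hs : 0 < s) :
    ∃ C, ∀ t > 0, ∀ x ≥ 1,
      |abelSummand p s t x - abelKernel p s t (x + s / 2)| ≤ C * (t ^ 2)⁻¹ * x ^ (-p - 1) := by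
  set σ := s / (1 + s / 2)
  have hσ : 0 < σ := by positivity
  set C₁ := p * (p + 1) * (p + 2) * (1 + (s - 1) ^ 2) / 4
  set C₂ := s ^ 3 / 2 * (p + p * (p + 1) * |s - 1| / 2)
  refine ⟨C₁ * (2 / σ ^ 2) + C₂ * (6 / σ ^ 3), fun t ht x hx ↦ ?_⟩
  have hx₀ : 0 < x := by linarith
  have hK₂ : invGammaKernel (p + 2) (t * σ) x ≤ 2 / (t * σ) ^ 2 * x ^ (-p - 1) :=
    mod_cast invGammaKernel.add_natCast_le 2 (mul_pos ht hσ) hx₀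
  have hK₃ : invGammaKernel (p + 3) (t * σ) x ≤ 6 / (t * σ) ^ 3 * x ^ (-p - 1) :=
    mod_cast invGammaKernel.add_natCast_le 3 (mul_pos ht hσ) hx₀
  calc |abelSummand p s t x - abelKernel p s t (x + s / 2)|
      ≤ C₁ * invGammaKernel (p + 2) (t * σ) x + C₂ * (t * invGammaKernel (p + 3) (t * σ) x) :=
        abs_abelSummand_sub_abelKernel_le hp hs.le ht.le hx
    _ ≤ C₁ * (2 / (t * σ) ^ 2 * x ^ (-p - 1)) + C₂ * (t * (6 / (t * σ) ^ 3 * x ^ (-p - 1))) := by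
        gcongr
    _ = _ := by
        field_simp

lemma summable_invGammaKernel_nat_add_one_add_half {a r : ℝ} (ha : 0 < a) (hr : 0 < r)
    (hs : 0 ≤ s) : Summable fun k : ℕ ↦ invGammaKernel a r (k + 1 + s / 2) := by
  refine (invGammaKernel.summable ha hr (by positivity : 0 < 1 + s / 2)).congr fun k ↦ ?_
  ring_nf

lemma summable_abelKernel (hp : 0 < p) (hs : 0 < s) (ht : 0 < t) :
    Summable fun k : ℕ ↦ abelKernel p s t (k + 1 + s / 2) :=
  have hr := mul_pos ht hs
  ((summable_invGammaKernel_nat_add_one_add_half hp hr hs.le).mul_left _).add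
    ((summable_invGammaKernel_nat_add_one_add_half (by linarith) hr hs.le).mul_left _)

lemma tsum_abelKernel (hp : 0 < p) (hs : 0 < s) (ht : 0 < t) :
    ∑' k : ℕ, abelKernel p s t (k + 1 + s / 2) =
      p * ∑' k : ℕ, invGammaKernel p (t * s) (k + 1 + s / 2)
        + p * (p + 1) * (s - 1) / 2
          * ∑' k : ℕ, invGammaKernel (p + 1) (t * s) (k + 1 + s / 2) := by
  have hr := mul_pos ht hs
  simp only [abelKernel]
  rw [((summable_invGammaKernel_nat_add_one_add_half hp hr hs.le).mul_left _).tsum_add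
    ((summable_invGammaKernel_nat_add_one_add_half (by linarith) hr hs.le).mul_left _),
    tsum_mul_left, tsum_mul_left]

lemma isBigO_tsum_abelSummand_sub_tsum_abelKernel (hp : 0 < p) (hs : 0 < s) :
    (fun t ↦ ∑' k : ℕ, abelSummand p s t (k + 1) - ∑' k : ℕ, abelKernel p s t (k + 1 + s / 2))
      =O[atTop] fun t ↦ (t ^ 2)⁻¹ := by
  obtain ⟨C, hC⟩ := exists_abs_abelSummand_sub_abelKernel_le_rpow hp hs
  have hpow : Summable fun k : ℕ ↦ (1 + k : ℝ) ^ (-p - 1) :=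
    summable_add_natCast_rpow one_pos (by linarith)
  refine .of_bound (C * ∑' k : ℕ, (1 + k : ℝ) ^ (-p - 1)) ?_
  filter_upwards [eventually_gt_atTop 0] with t ht
  have hterm (k : ℕ) : ‖abelSummand p s t (k + 1) - abelKernel p s t (k + 1 + s / 2)‖ ≤
      C * (t ^ 2)⁻¹ * (1 + k : ℝ) ^ (-p - 1) := by
    rw [add_comm 1 (k : ℝ)]
    exact hC t ht _ (by simp)
  have hdiff := Summable.of_norm_bounded (hpow.mul_left _) hterm
  have hsum : Summable fun k : ℕ ↦ abelSummand p s t (k + 1) := by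
    simpa using hdiff.add (summable_abelKernel hp hs ht)
  rw [← hsum.tsum_sub (summable_abelKernel hp hs ht),
    norm_of_nonneg (by positivity : 0 ≤ (t ^ 2)⁻¹), mul_right_comm]
  exact tsum_of_norm_bounded (hpow.hasSum.mul_left _) hterm

lemma isBigO_tsum_abelKernel_sub_Gamma (hp : 0 < p) (hs : 0 < s) :
    (fun t ↦ ∑' k : ℕ, abelKernel p s t (k + 1 + s / 2)
        - (p * (Gamma p * (t * s) ^ (-p))
          + p * (p + 1) * (s - 1) / 2 * (Gamma (p + 1) * (t * s) ^ (-(p + 1)))))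
      =O[atTop] fun t ↦ (t ^ 2)⁻¹ := by
  have hδ : 0 < (1 + s) / 2 := by positivity
  have hnode (k : ℕ) : (1 + s) / 2 + k + 1 / 2 = k + 1 + s / 2 := by ring
  have hK {a : ℝ} (ha : 0 < a) :
      (fun t ↦ ∑' k : ℕ, invGammaKernel a (t * s) (k + 1 + s / 2) - Gamma a * (t * s) ^ (-a))
        =O[atTop] fun t ↦ (t ^ 2)⁻¹ := by
    have h := (invGammaKernel.isBigO_tsum_sub_Gamma (m := 2) ha hδ
      (by push_cast; linarith)).comp_tendsto (tendsto_id.atTop_mul_const hs)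
    simp only [Function.comp_def, id, hnode, mul_pow, mul_inv] at h
    exact h.trans ((isBigO_const_mul_self _ _ _).congr_left fun _ ↦ mul_comm _ _)
  refine (((hK hp).const_mul_left p).add
    ((hK (add_pos hp one_pos)).const_mul_left (p * (p + 1) * (s - 1) / 2))).congr' ?_ .rfl
  filter_upwards [eventually_gt_atTop 0] with t ht
  rw [tsum_abelKernel hp hs ht]
  simp only [mul_sub, add_sub_add_comm]

lemma abelKernel_main_terms_eq (hp : 0 < p) (hs : 0 < s) (ht : 0 < t) :
    p * (Gamma p * (t * s) ^ (-p))
        + p * (p + 1) * (s - 1) / 2 * (Gamma (p + 1) * (t * s) ^ (-(p + 1))) =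
      Gamma (p + 1) / (s ^ p * t ^ p)
        + (s - 1) * p * Gamma (p + 2) / (2 * s ^ (p + 1) * t ^ (p + 1)) := by
  have hp₁ : p + 1 ≠ 0 := by positivity
  rw [show p + 2 = p + 1 + 1 by ring, Gamma_add_one hp₁, Gamma_add_one hp.ne',
    rpow_neg (by positivity), rpow_neg (by positivity), mul_rpow ht.le hs.le,
    mul_rpow ht.le hs.le]
  field_simp

theorem isBigO_tsum_abelSummand_sub_Gamma (hp : 0 < p) (hs : 0 < s) :
    (fun t ↦ ∑' k : ℕ, abelSummand p s t (k + 1) - Gamma (p + 1) / (s ^ p * t ^ p)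
        - (s - 1) * p * Gamma (p + 2) / (2 * s ^ (p + 1) * t ^ (p + 1)))
      =O[atTop] fun t ↦ (t ^ 2)⁻¹ := by
  refine ((isBigO_tsum_abelSummand_sub_tsum_abelKernel hp hs).add
    (isBigO_tsum_abelKernel_sub_Gamma hp hs)).congr' ?_ .rfl
  filter_upwards [eventually_gt_atTop 0] with t ht
  rw [sub_add_sub_cancel, abelKernel_main_terms_eq hp hs ht, sub_sub]

end Pareto

/-! ### Abel summation for expectations -/

lemma hasSum_sub_succ_of_antitone {g : ℕ → ℝ} {l : ℝ} (hg : Antitone g)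
    (hlim : Tendsto g atTop (𝓝 l)) : HasSum (fun k ↦ g k - g (k + 1)) (g 0 - l) := by
  rw [hasSum_iff_tendsto_nat_of_nonneg fun k ↦ sub_nonneg.2 (hg k.le_succ)]
  simpa only [Finset.sum_range_sub'] using tendsto_const_nhds.sub hlim

lemma hasSum_indicator_Ici_sub_succ_of_antitone {g : ℕ → ℝ} {l : ℝ} (hg : Antitone g)
    (hlim : Tendsto g atTop (𝓝 l)) (m : ℕ) :
    HasSum ((Ici m).indicator fun k ↦ g k - g (k + 1)) (g m - l) := by
  have htail := hasSum_sub_succ_of_antitone (g := fun k ↦ g (k + m))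
    (fun i j hij ↦ hg (by lia)) (hlim.comp (tendsto_add_atTop_nat m))
  refine ((add_left_injective m).hasSum_iff fun k hk ↦ indicator_of_notMem ?_ _).1 ?_
  · exact fun hmk ↦ hk ⟨k - m, Nat.sub_add_cancel hmk⟩
  · simpa [Function.comp_def, add_right_comm] using htail

section Expectation

variable {Ω : Type*} [MeasurableSpace Ω] {μ : Measure Ω} [IsFiniteMeasure μ]

theorem hasSum_measureReal_le_mul_sub_succ {g : ℕ → ℝ} {M : Ω → ℕ} (hg : Antitone g)
    (hlim : Tendsto g atTop (𝓝 0)) (hM : Measurable M) :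
    HasSum (fun k ↦ μ.real {ω | M ω ≤ k} * (g k - g (k + 1))) (∫ ω, g (M ω) ∂μ) := by
  have hmeas (k : ℕ) : MeasurableSet {ω | M ω ≤ k} := measurableSet_le hM measurable_const
  have hdiff (k : ℕ) : 0 ≤ g k - g (k + 1) := sub_nonneg.2 (hg k.le_succ)
  have hint (k : ℕ) : Integrable ({ω | M ω ≤ k}.indicator fun _ ↦ g k - g (k + 1)) μ :=
    (integrable_const _).indicator (hmeas k)
  have hval (k : ℕ) : ∫ ω, {ω | M ω ≤ k}.indicator (fun _ ↦ g k - g (k + 1)) ω ∂μ =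
      μ.real {ω | M ω ≤ k} * (g k - g (k + 1)) := integral_indicator_const _ (hmeas k)
  have hsum : Summable fun k ↦
      ∫ ω, ‖{ω | M ω ≤ k}.indicator (fun _ ↦ g k - g (k + 1)) ω‖ ∂μ := by
    simp only [norm_indicator_eq_indicator_norm, norm_of_nonneg (hdiff _), hval]
    refine ((hasSum_sub_succ_of_antitone hg hlim).summable.mul_left (μ.real univ)).of_nonneg_of_le
      (fun k ↦ mul_nonneg measureReal_nonneg (hdiff k)) fun k ↦ ?_
    exact mul_le_mul_of_nonneg_right (measureReal_mono (subset_univ _)) (hdiff k)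
  have htsum (ω : Ω) : ∑' k, {ω | M ω ≤ k}.indicator (fun _ ↦ g k - g (k + 1)) ω = g (M ω) := by
    simpa [indicator] using (hasSum_indicator_Ici_sub_succ_of_antitone hg hlim (M ω)).tsum_eq
  simpa only [hval, htsum] using hasSum_integral_of_summable_integral_norm hint hsum

lemma antitone_natCast_add_one_rpow_neg {p : ℝ} (hp : 0 ≤ p) :
    Antitone fun k : ℕ ↦ ((k : ℝ) + 1) ^ (-p) := fun i j hij ↦
  rpow_le_rpow_of_nonpos (by positivity) (by gcongr) (by linarith)

lemma tendsto_natCast_add_one_rpow_neg {p : ℝ} (hp : 0 < p) :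
    Tendsto (fun k : ℕ ↦ ((k : ℝ) + 1) ^ (-p)) atTop (𝓝 0) :=
  (tendsto_rpow_neg_atTop hp).comp
    (tendsto_atTop_add_const_right _ _ tendsto_natCast_atTop_atTop)

theorem integral_rpow_neg_eq_tsum_measureReal_le {p : ℝ} {N : Ω → ℕ} (hp : 0 < p)
    (hN : Measurable N) (hpos : ∀ᵐ ω ∂μ, 1 ≤ N ω) :
    ∫ ω, (N ω : ℝ) ^ (-p) ∂μ =
      ∑' k : ℕ, μ.real {ω | N ω ≤ k + 1} * (((k : ℝ) + 1) ^ (-p) - ((k : ℝ) + 1 + 1) ^ (-p)) := by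
  have habel := hasSum_measureReal_le_mul_sub_succ (μ := μ) (M := fun ω ↦ N ω - 1)
    (antitone_natCast_add_one_rpow_neg hp.le) (tendsto_natCast_add_one_rpow_neg hp)
    (hN.sub_const 1)
  simp only [Nat.sub_le_iff_le_add, Nat.cast_add_one] at habel
  rw [habel.tsum_eq]
  refine integral_congr_ae ?_
  filter_upwards [hpos] with ω hω
  rw [Nat.cast_pred hω, sub_add_cancel]

lemma integral_rpow_neg_eq_tsum_abelSummand {s p : ℝ} {n : ℕ} {N : Ω → ℕ} (hp : 0 < p)
    (hn : n ≠ 0) (hN : Measurable N)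
    (hlaw : ∀ k : ℕ, μ.real {ω | N ω ≤ k} = ((k : ℝ) / (s + k)) ^ n) :
    ∫ ω, (N ω : ℝ) ^ (-p) ∂μ = ∑' k : ℕ, abelSummand p s n (k + 1) := by
  have hpos : ∀ᵐ ω ∂μ, 1 ≤ N ω := by
    have hzero : μ {ω | N ω ≤ 0} = 0 := by
      rw [← measureReal_eq_zero_iff]
      simpa [hn] using hlaw 0
    filter_upwards [measure_eq_zero_iff_ae_notMem.1 hzero] with ω hω
    exact not_le.1 hω
  rw [integral_rpow_neg_eq_tsum_measureReal_le hp hN hpos]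
  refine tsum_congr fun k ↦ ?_
  rw [hlaw, abelSummand, rpow_natCast, Nat.cast_add_one]

end Expectation

theorem discrete_pareto_negative_moment_expansion_general
    {Ω : Type*} [MeasurableSpace Ω] (μ : Measure Ω) [IsProbabilityMeasure μ]
    (s : ℝ) (hs : 0 < s) (p : ℝ) (hp : 0 < p)
    (N : ℕ → Ω → ℕ) (hNmeas : ∀ n, Measurable (N n))
    (hlaw : ∀ n : ℕ, ∀ k : ℕ,
      (μ {ω | N n ω ≤ k}).toReal = ((k : ℝ) / (s + k)) ^ n) :
    ∃ c : ℝ, ∀ n : ℕ, 1 ≤ n →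
      |(∫ ω, ((N n ω : ℝ)) ^ (-p) ∂μ)
          - Real.Gamma (p + 1) / (s ^ p * (n : ℝ) ^ p)
          - (s - 1) * p * Real.Gamma (p + 2) / (2 * s ^ (p + 1) * (n : ℝ) ^ (p + 1))|
        ≤ c / (n : ℝ) ^ 2 := by
  obtain ⟨c, -, hc⟩ := bound_of_isBigO_nat_atTop
    ((isBigO_tsum_abelSummand_sub_Gamma hp hs).comp_tendsto tendsto_natCast_atTop_atTop)
  refine ⟨c, fun n hn ↦ ?_⟩
  have hn₀ : n ≠ 0 := by lia
  rw [integral_rpow_neg_eq_tsum_abelSummand hp hn₀ (hNmeas n) (hlaw n)]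
  refine (hc (inv_ne_zero (pow_ne_zero 2 (Nat.cast_ne_zero.2 hn₀)))).trans_eq ?_
  simp [div_eq_mul_inv]

/-- Expansion of negative moments of the maximum of discrete Pareto variables:
if `P(N_n(s) ≤ k) = (k/(s+k))^n`, then for `0 < p < 1`,
`E[(N_n(s))^{-p}] = Γ(p+1)/(s^p n^p) + (s-1)pΓ(p+2)/(2 s^{p+1} n^{p+1}) + R_n`
with `|R_n| ≤ c(p,s) n^{-2}` for a constant `c(p,s)` independent of `n`. -/
theorem discrete_pareto_negative_moment_expansion
    {Ω : Type*} [MeasurableSpace Ω] (μ : Measure Ω) [IsProbabilityMeasure μ]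
    (s : ℝ) (hs : 0 < s) (p : ℝ) (hp : 0 < p) (hp1 : p < 1)
    (N : ℕ → Ω → ℕ) (hNmeas : ∀ n, Measurable (N n))
    (hlaw : ∀ n : ℕ, ∀ k : ℕ,
      (μ {ω | N n ω ≤ k}).toReal = ((k : ℝ) / (s + k)) ^ n) :
    ∃ c : ℝ, ∀ n : ℕ, 1 ≤ n →
      |(∫ ω, ((N n ω : ℝ)) ^ (-p) ∂μ)
          - Real.Gamma (p + 1) / (s ^ p * (n : ℝ) ^ p)
          - (s - 1) * p * Real.Gamma (p + 2) / (2 * s ^ (p + 1) * (n : ℝ) ^ (p + 1))|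
        ≤ c / (n : ℝ) ^ 2 :=
  discrete_pareto_negative_moment_expansion_general μ s hs p hp N hNmeas hlaw
end

section
/- For r > 1 and g_n ≥ 1, | ∫_{1/g_n}^∞ x^{α-1} e^{-rx} sin(2π k g_n x) dx | ≤ Γ(α)/(2π k g_n)^α for every α ∈ (0,1) and integer k ≥ 1; consequently, Σ_{k≥1} (1/(kπ)) ∫_0^∞ x^{α-1} e^{-rx} sin(2π k g_n x) dx converges absolutely with absolute value at most (Γ(α)/(π(2π)^α)) ζ(α+1) g_n^{-α}. -/
open MeasureTheory Real

/-!
The sine of period `2π / b` changes sign after half a period, so a decreasing function weighted by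
it has a nonnegative integral over each full period `(p, p + 2π / b]` with `b * p ∈ 2πℤ`.
Truncating at a multiple of the period therefore drops a nonnegative amount and leaves a
nonnegative one, and the truncated integral lies between `0` and the full integral. The latter is
the imaginary part of `∫ x ^ (α - 1) * exp (-(r - b * I) * x) = Γ(α) * (r - b * I) ^ (-α)`,
which is the classical Gamma integral continued analytically from real to complex rates. Summing
the resulting bound `Γ(α) / (2πkg) ^ α` against `1 / (kπ)` gives the series `∑ 1 / k ^ (α + 1)`.
-/

open Set Filter

section Antiperiodic

variable {f w : ℝ → ℝ} {p T : ℝ}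

lemma intervalIntegral_mul_antiperiodic_nonneg (hT : 0 ≤ T) (hw : Function.Antiperiodic w T)
    (hw_nonneg : ∀ x ∈ Ioc p (p + T), 0 ≤ w x) (hf : AntitoneOn f (Ioc p (p + 2 * T)))
    (hfw : IntervalIntegrable (fun x ↦ f x * w x) volume p (p + 2 * T)) :
    0 ≤ ∫ x in p..p + 2 * T, f x * w x := by
  have hmid : p + T ∈ uIcc p (p + 2 * T) := by
    rw [uIcc_of_le (by linarith)]
    constructor <;> linarith
  have hfw_left : IntervalIntegrable (fun x ↦ f x * w x) volume p (p + T) :=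
    hfw.mono_set (uIcc_subset_uIcc_left hmid)
  have hfw_right : IntervalIntegrable (fun x ↦ f x * w x) volume (p + T) (p + 2 * T) :=
    hfw.mono_set (uIcc_subset_uIcc_right hmid)
  have hfw_shift : IntervalIntegrable (fun x ↦ f (x + T) * w (x + T)) volume p (p + T) := by
    convert hfw_right.comp_add_right T using 1 <;> ring
  have hfold : ∫ x in p..p + 2 * T, f x * w x = ∫ x in p..p + T, (f x - f (x + T)) * w x := by
    calc ∫ x in p..p + 2 * T, f x * w x
        = (∫ x in p..p + T, f x * w x) + ∫ x in p + T..p + 2 * T, f x * w x :=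
          (intervalIntegral.integral_add_adjacent_intervals hfw_left hfw_right).symm
      _ = (∫ x in p..p + T, f x * w x) + ∫ x in p..p + T, f (x + T) * w (x + T) := by
          rw [intervalIntegral.integral_comp_add_right (fun x ↦ f x * w x), two_mul, add_assoc]
      _ = ∫ x in p..p + T, (f x * w x + f (x + T) * w (x + T)) :=
          (intervalIntegral.integral_add hfw_left hfw_shift).symm
      _ = ∫ x in p..p + T, (f x - f (x + T)) * w x := by
          simp only [hw _, mul_neg, ← sub_eq_add_neg, sub_mul]
  rw [hfold, intervalIntegral.integral_of_le (by linarith)]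
  refine setIntegral_nonneg measurableSet_Ioc fun x hx ↦
    mul_nonneg (sub_nonneg.2 (hf ?_ ?_ (by linarith))) (hw_nonneg x hx) <;>
  constructor <;> linarith [hx.1, hx.2]

lemma nonneg_on_Ioc_add_periods (hw : Function.Antiperiodic w T)
    (hw_nonneg : ∀ x ∈ Ioc p (p + T), 0 ≤ w x) (n : ℕ) :
    ∀ x ∈ Ioc (p + n * (2 * T)) (p + n * (2 * T) + T), 0 ≤ w x := by
  intro x hx
  rw [← hw.periodic_two_mul.sub_nat_mul_eq n]
  exact hw_nonneg _ ⟨by linarith [hx.1], by linarith [hx.2]⟩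

lemma intervalIntegral_mul_antiperiodic_add_periods_nonneg (hT : 0 ≤ T)
    (hw : Function.Antiperiodic w T) (hw_nonneg : ∀ x ∈ Ioc p (p + T), 0 ≤ w x)
    (hf : AntitoneOn f (Ioi p)) (hfw : IntegrableOn (fun x ↦ f x * w x) (Ioi p)) (n : ℕ) :
    0 ≤ ∫ x in p..p + n * (2 * T), f x * w x := by
  have hle (m : ℕ) : p ≤ p + m * (2 * T) := le_add_of_nonneg_right (by positivity)
  have hint {u v : ℝ} (hu : p ≤ u) (huv : u ≤ v) :
      IntervalIntegrable (fun x ↦ f x * w x) volume u v :=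
    (intervalIntegrable_iff_integrableOn_Ioc_of_le huv).2
      (hfw.mono_set fun _ hx ↦ hu.trans_lt hx.1)
  induction n with
  | zero => simp
  | succ n ih =>
    have hstep : p + (n + 1 : ℕ) * (2 * T) = p + n * (2 * T) + 2 * T := by push_cast; ring
    have hlast := hint (hle n) (v := p + n * (2 * T) + 2 * T) (by linarith)
    rw [hstep, ← intervalIntegral.integral_add_adjacent_intervals (hint le_rfl (hle n)) hlast]
    exact add_nonneg ih (intervalIntegral_mul_antiperiodic_nonneg hT hw
      (nonneg_on_Ioc_add_periods hw hw_nonneg n)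
      (hf.mono fun _ hx ↦ (hle n).trans_lt hx.1) hlast)

lemma integral_Ioi_mul_antiperiodic_nonneg (hT : 0 < T) (hw : Function.Antiperiodic w T)
    (hw_nonneg : ∀ x ∈ Ioc p (p + T), 0 ≤ w x) (hf : AntitoneOn f (Ioi p))
    (hfw : IntegrableOn (fun x ↦ f x * w x) (Ioi p)) :
    0 ≤ ∫ x in Ioi p, f x * w x := by
  have hlim : Tendsto (fun n : ℕ ↦ p + n * (2 * T)) atTop atTop :=
    tendsto_atTop_add_const_left _ _ (tendsto_natCast_atTop_atTop.atTop_mul_const (by positivity))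
  exact ge_of_tendsto' (intervalIntegral_tendsto_integral_Ioi p hfw hlim)
    (intervalIntegral_mul_antiperiodic_add_periods_nonneg hT.le hw hw_nonneg hf hfw)

lemma integral_Ioi_add_periods_mul_antiperiodic_mem_Icc (hT : 0 < T)
    (hw : Function.Antiperiodic w T) (hw_nonneg : ∀ x ∈ Ioc p (p + T), 0 ≤ w x)
    (hf : AntitoneOn f (Ioi p)) (hfw : IntegrableOn (fun x ↦ f x * w x) (Ioi p)) (n : ℕ) :
    ∫ x in Ioi (p + n * (2 * T)), f x * w x ∈ Icc 0 (∫ x in Ioi p, f x * w x) := by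
  have hle : p ≤ p + n * (2 * T) := le_add_of_nonneg_right (by positivity)
  have hsub : Ioi (p + n * (2 * T)) ⊆ Ioi p := Ioi_subset_Ioi hle
  refine ⟨integral_Ioi_mul_antiperiodic_nonneg hT hw (nonneg_on_Ioc_add_periods hw hw_nonneg n)
    (hf.mono hsub) (hfw.mono_set hsub), sub_nonneg.1 ?_⟩
  rw [intervalIntegral.integral_Ioi_sub_Ioi hfw hle]
  exact intervalIntegral_mul_antiperiodic_add_periods_nonneg hT.le hw hw_nonneg hf hfw n

end Antiperiodic

section ComplexRate

lemma norm_cexp_neg_mul_ofReal (z : ℂ) (x : ℝ) :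
    ‖Complex.exp (-(z * x))‖ = Real.exp (-z.re * x) := by
  simp [Complex.norm_exp]

lemma mul_exp_neg_mul_le_inv {δ : ℝ} (hδ : 0 < δ) (x : ℝ) : x * Real.exp (-δ * x) ≤ δ⁻¹ := by
  rw [neg_mul, Real.exp_neg, ← div_eq_mul_inv, div_le_iff₀ (Real.exp_pos _), ← div_eq_inv_mul,
    le_div_iff₀ hδ]
  linarith [Real.add_one_le_exp (δ * x)]

section NormedSpace

variable {E : Type*} [NormedAddCommGroup E] [NormedSpace ℂ E]

lemma norm_neg_smul_cexp_neg_mul_smul_le {δ x : ℝ} (hδ : 0 < δ) (hx : 0 ≤ x) {z w : ℂ}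
    (hzw : z.re + δ ≤ w.re) (y : E) :
    ‖-(x : ℂ) • Complex.exp (-(w * x)) • y‖ ≤ δ⁻¹ * ‖Complex.exp (-(z * x)) • y‖ := by
  simp only [norm_smul, norm_neg, Complex.norm_real, Real.norm_of_nonneg hx,
    norm_cexp_neg_mul_ofReal, ← mul_assoc]
  refine mul_le_mul_of_nonneg_right ?_ (norm_nonneg y)
  calc x * Real.exp (-w.re * x)
      ≤ x * Real.exp (-δ * x + -z.re * x) := by
        gcongr
        linarith [mul_le_mul_of_nonneg_right hzw hx]
    _ = x * Real.exp (-δ * x) * Real.exp (-z.re * x) := by rw [Real.exp_add, mul_assoc]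
    _ ≤ δ⁻¹ * Real.exp (-z.re * x) := by
        gcongr
        exact mul_exp_neg_mul_le_inv hδ x

lemma differentiableOn_integral_Ioi_cexp_neg_mul_smul {f : ℝ → E} {c : ℝ}
    (hf : ∀ z : ℂ, c < z.re → IntegrableOn (fun x : ℝ ↦ Complex.exp (-(z * x)) • f x) (Ioi 0)) :
    DifferentiableOn ℂ (fun z : ℂ ↦ ∫ x in Ioi (0 : ℝ), Complex.exp (-(z * x)) • f x)
      {z | c < z.re} := by
  intro z hz
  have hz : c < z.re := hz
  obtain ⟨δ, hδ, hcδ⟩ : ∃ δ > 0, c < z.re - 2 * δ := ⟨(z.re - c) / 3, by linarith, by linarith⟩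
  have hre {v : ℂ} (hv : v ∈ Metric.ball z δ) : z.re - δ ≤ v.re := by
    have := (Complex.abs_re_le_norm (v - z)).trans (mem_ball_iff_norm.1 hv).le
    rw [Complex.sub_re] at this
    linarith [(abs_le.1 this).1]
  let σ : ℂ := (z.re - 2 * δ : ℝ)
  have hderiv (v : ℂ) (x : ℝ) : HasDerivAt (fun v : ℂ ↦ Complex.exp (-(v * x)) • f x)
      (-(x : ℂ) • Complex.exp (-(v * x)) • f x) v := by
    rw [smul_smul, mul_comm]
    exact ((hasDerivAt_mul_const (x := v) (x : ℂ)).neg.cexp).smul_const (f x)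
  have hbound : ∀ᵐ x : ℝ ∂volume.restrict (Ioi 0), ∀ v ∈ Metric.ball z δ,
      ‖-(x : ℂ) • Complex.exp (-(v * x)) • f x‖ ≤ δ⁻¹ * ‖Complex.exp (-(σ * x)) • f x‖ := by
    filter_upwards [ae_restrict_mem measurableSet_Ioi] with x hx v hv
    refine norm_neg_smul_cexp_neg_mul_smul_le hδ (le_of_lt hx) ?_ (f x)
    linarith [hre hv, Complex.ofReal_re (z.re - 2 * δ)]
  have hmeas : AEStronglyMeasurable (fun x : ℝ ↦ -(x : ℂ) • Complex.exp (-(z * x)) • f x)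
      (volume.restrict (Ioi 0)) :=
    (Measurable.aestronglyMeasurable (by fun_prop)).smul (hf z hz).aestronglyMeasurable
  refine (hasDerivAt_integral_of_dominated_loc_of_deriv_le (μ := volume.restrict (Ioi 0))
    (F := fun (v : ℂ) (x : ℝ) ↦ Complex.exp (-(v * x)) • f x) (Metric.ball_mem_nhds z hδ) ?_
    (hf z hz) hmeas hbound ((hf σ hcδ).norm.const_mul _)
    (.of_forall fun x v _ ↦ hderiv v x)).2.differentiableAt.differentiableWithinAt
  filter_upwards [Metric.ball_mem_nhds z hδ] with v hv
  exact (hf v (by linarith [hre hv])).aestronglyMeasurable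

end NormedSpace

lemma integrableOn_rpow_mul_exp_neg_mul_Ioi {α r : ℝ} (hα : 0 < α) (hr : 0 < r) :
    IntegrableOn (fun x : ℝ ↦ x ^ (α - 1) * Real.exp (-r * x)) (Ioi 0) := by
  simpa only [Real.rpow_one] using
    integrableOn_rpow_mul_exp_neg_mul_rpow (s := α - 1) (by linarith) one_pos hr

lemma integrableOn_cpow_mul_cexp_neg_mul_Ioi {a z : ℂ} (ha : 0 < a.re) (hz : 0 < z.re) :
    IntegrableOn (fun x : ℝ ↦ (x : ℂ) ^ (a - 1) * Complex.exp (-(z * x))) (Ioi 0) := by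
  refine (integrableOn_rpow_mul_exp_neg_mul_Ioi ha hz).mono'
    (Measurable.aestronglyMeasurable (by fun_prop)) ?_
  filter_upwards [ae_restrict_mem measurableSet_Ioi] with x hx
  rw [norm_mul, Complex.norm_cpow_eq_rpow_re_of_pos hx, norm_cexp_neg_mul_ofReal, Complex.sub_re,
    Complex.one_re]

lemma eqOn_re_pos_of_eq_ofReal_pos {F G : ℂ → ℂ} (hF : DifferentiableOn ℂ F {z | 0 < z.re})
    (hG : DifferentiableOn ℂ G {z | 0 < z.re}) (hFG : ∀ t : ℝ, 0 < t → F t = G t) :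
    EqOn F G {z | 0 < z.re} := by
  have hopen : IsOpen {z : ℂ | 0 < z.re} := isOpen_lt continuous_const Complex.continuous_re
  refine (hF.analyticOnNhd hopen).eqOn_of_preconnected_of_frequently_eq (hG.analyticOnNhd hopen)
    (convex_halfSpace_re_gt 0).isPreconnected (z₀ := ((1 : ℝ) : ℂ)) (by simp) ?_
  have htendsto : Tendsto (fun t : ℝ ↦ (t : ℂ)) (nhdsWithin 1 {1}ᶜ)
      (nhdsWithin ((1 : ℝ) : ℂ) {((1 : ℝ) : ℂ)}ᶜ) :=
    Complex.continuous_ofReal.continuousWithinAt.tendsto_nhdsWithin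
      fun _ ht h ↦ ht (Complex.ofReal_injective h)
  refine htendsto.frequently (Eventually.frequently ?_)
  filter_upwards [nhdsWithin_le_nhds (lt_mem_nhds one_pos)] with t ht using hFG t ht

lemma integral_cpow_mul_cexp_neg_mul_Ioi {a z : ℂ} (ha : 0 < a.re) (hz : 0 < z.re) :
    ∫ x in Ioi (0 : ℝ), (x : ℂ) ^ (a - 1) * Complex.exp (-(z * x))
      = (1 / z) ^ a * Complex.Gamma a := by
  refine eqOn_re_pos_of_eq_ofReal_pos
    (F := fun z ↦ ∫ x in Ioi (0 : ℝ), (x : ℂ) ^ (a - 1) * Complex.exp (-(z * x)))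
    (G := fun z ↦ (1 / z) ^ a * Complex.Gamma a) ?_ (fun w hw ↦ ?_)
    (fun t ht ↦ Complex.integral_cpow_mul_exp_neg_mul_Ioi ha ht) hz
  · simp only [mul_comm ((_ : ℂ) ^ (a - 1)), ← smul_eq_mul (Complex.exp _)]
    refine differentiableOn_integral_Ioi_cexp_neg_mul_smul fun w hw ↦ ?_
    simpa only [smul_eq_mul, mul_comm] using integrableOn_cpow_mul_cexp_neg_mul_Ioi ha hw
  · have hw : 0 < w.re := hw
    have hw0 : w ≠ 0 := fun h ↦ by simp [h] at hw
    have hinv : 0 < (1 / w).re := by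
      rw [one_div, Complex.inv_re]
      exact div_pos hw (Complex.normSq_pos.2 hw0)
    have hdiff : DifferentiableAt ℂ (fun w : ℂ ↦ 1 / w) w := by
      simpa only [one_div] using differentiableAt_inv hw0
    exact ((hdiff.cpow_const (Or.inl hinv)).mul_const _).differentiableWithinAt

end ComplexRate

section SineGammaIntegral

variable {α r b : ℝ}

lemma arg_eq_arctan_of_re_pos {z : ℂ} (hz : 0 < z.re) : z.arg = Real.arctan (z.im / z.re) := by
  obtain ⟨hlt, hgt⟩ := abs_lt.1 (Complex.abs_arg_lt_pi_div_two_iff.2 (Or.inl hz))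
  rw [← Complex.tan_arg, Real.arctan_tan hlt hgt]

lemma im_one_div_cpow_ofReal (α : ℝ) (hr : 0 < r) (b : ℝ) :
    ((1 / (⟨r, -b⟩ : ℂ)) ^ (α : ℂ)).im
      = Real.sin (α * Real.arctan (b / r)) / (b ^ 2 + r ^ 2) ^ (α / 2) := by
  have hnormSq : 0 < Complex.normSq ⟨r, -b⟩ :=
    Complex.normSq_pos.2 fun h ↦ hr.ne' (congrArg Complex.re h)
  have harg : (1 / (⟨r, -b⟩ : ℂ)).arg = Real.arctan (b / r) := by
    have hre : 0 < (1 / (⟨r, -b⟩ : ℂ)).re := by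
      rw [one_div, Complex.inv_re]
      exact div_pos hr hnormSq
    rw [arg_eq_arctan_of_re_pos hre, one_div, Complex.inv_re, Complex.inv_im, neg_neg,
      div_div_div_cancel_right₀ hnormSq.ne']
  have hnorm : ‖(⟨r, -b⟩ : ℂ)‖ ^ α = (b ^ 2 + r ^ 2) ^ (α / 2) := by
    rw [Complex.norm_def, Real.sqrt_eq_rpow, ← Real.rpow_mul (Complex.normSq_nonneg _),
      Complex.normSq_mk]
    ring_nf
  rw [Complex.cpow_ofReal_im, harg, norm_div, norm_one, Real.div_rpow zero_le_one (norm_nonneg _),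
    Real.one_rpow, hnorm, mul_comm _ α, one_div_mul_eq_div]

lemma cpow_mul_cexp_neg_mul_im {x : ℝ} (hx : 0 ≤ x) (α r b : ℝ) :
    ((x : ℂ) ^ ((α : ℂ) - 1) * Complex.exp (-(⟨r, -b⟩ * x))).im
      = x ^ (α - 1) * Real.exp (-r * x) * Real.sin (b * x) := by
  have hpow : (x : ℂ) ^ ((α : ℂ) - 1) = (x ^ (α - 1) : ℝ) := by
    rw [Complex.ofReal_cpow hx, Complex.ofReal_sub, Complex.ofReal_one]
  rw [hpow, Complex.im_ofReal_mul, Complex.exp_im]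
  simp [mul_assoc]

lemma integral_rpow_mul_exp_neg_mul_mul_sin (hα : 0 < α) (hr : 0 < r) (b : ℝ) :
    ∫ x in Ioi (0 : ℝ), x ^ (α - 1) * Real.exp (-r * x) * Real.sin (b * x)
      = Real.Gamma α * Real.sin (α * Real.arctan (b / r)) / (b ^ 2 + r ^ 2) ^ (α / 2) := by
  let z : ℂ := ⟨r, -b⟩
  have ha : 0 < (α : ℂ).re := hα
  calc ∫ x in Ioi (0 : ℝ), x ^ (α - 1) * Real.exp (-r * x) * Real.sin (b * x)
      = ∫ x in Ioi (0 : ℝ), ((x : ℂ) ^ ((α : ℂ) - 1) * Complex.exp (-(z * x))).im :=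
        setIntegral_congr_fun measurableSet_Ioi
          fun x hx ↦ (cpow_mul_cexp_neg_mul_im (le_of_lt hx) α r b).symm
    _ = (∫ x in Ioi (0 : ℝ), (x : ℂ) ^ ((α : ℂ) - 1) * Complex.exp (-(z * x))).im :=
        integral_im (𝕜 := ℂ) (integrableOn_cpow_mul_cexp_neg_mul_Ioi ha hr)
    _ = ((1 / z) ^ (α : ℂ)).im * Real.Gamma α := by
        rw [integral_cpow_mul_cexp_neg_mul_Ioi ha hr, Complex.Gamma_ofReal, Complex.im_mul_ofReal]
    _ = _ := by rw [im_one_div_cpow_ofReal α hr b, mul_comm, mul_div_assoc]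

lemma abs_integral_rpow_mul_exp_neg_mul_mul_sin_le (hα : 0 < α) (hr : 0 < r) (hb : 0 < b) :
    |∫ x in Ioi (0 : ℝ), x ^ (α - 1) * Real.exp (-r * x) * Real.sin (b * x)|
      ≤ Real.Gamma α / b ^ α := by
  have hΓ : 0 < Real.Gamma α := Real.Gamma_pos_of_pos hα
  have hpow : b ^ α ≤ (b ^ 2 + r ^ 2) ^ (α / 2) :=
    calc b ^ α = (b ^ 2) ^ (α / 2) := by
          rw [← Real.rpow_natCast_mul hb.le]
          push_cast
          ring_nf
      _ ≤ (b ^ 2 + r ^ 2) ^ (α / 2) := by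
          gcongr
          exact le_add_of_nonneg_right (sq_nonneg r)
  rw [integral_rpow_mul_exp_neg_mul_mul_sin hα hr, abs_div, abs_mul, abs_of_pos hΓ,
    abs_of_pos (by positivity : 0 < (b ^ 2 + r ^ 2) ^ (α / 2))]
  gcongr
  exact mul_le_of_le_one_right hΓ.le (Real.abs_sin_le_one _)

lemma antitoneOn_rpow_mul_exp_neg_mul (hα : α ≤ 1) (hr : 0 ≤ r) :
    AntitoneOn (fun x : ℝ ↦ x ^ (α - 1) * Real.exp (-r * x)) (Ioi 0) := by
  intro x hx y _ hxy
  have hx : 0 < x := hx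
  refine mul_le_mul (Real.rpow_le_rpow_of_nonpos hx hxy (by linarith)) ?_ (Real.exp_pos _).le
    (Real.rpow_nonneg hx.le _)
  exact Real.exp_le_exp.2 (mul_le_mul_of_nonpos_left hxy (neg_nonpos.2 hr))

lemma integrableOn_rpow_mul_exp_neg_mul_mul_sin (hα : 0 < α) (hr : 0 < r) (b : ℝ) :
    IntegrableOn (fun x : ℝ ↦ x ^ (α - 1) * Real.exp (-r * x) * Real.sin (b * x)) (Ioi 0) :=
  (integrableOn_rpow_mul_exp_neg_mul_Ioi hα hr).mul_bdd (c := 1) (by fun_prop)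
    (.of_forall fun x ↦ Real.abs_sin_le_one (b * x))

lemma abs_integral_Ioi_rpow_mul_exp_neg_mul_mul_sin_le (hα : 0 < α) (hα' : α ≤ 1) (hr : 0 < r)
    (hb : 0 < b) {c : ℝ} {n : ℕ} (hbc : b * c = n * (2 * π)) :
    |∫ x in Ioi c, x ^ (α - 1) * Real.exp (-r * x) * Real.sin (b * x)|
      ≤ Real.Gamma α / b ^ α := by
  have hanti : Function.Antiperiodic (fun x ↦ Real.sin (b * x)) (π / b) := fun x ↦ by
    change Real.sin (b * (x + π / b)) = -Real.sin (b * x)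
    rw [mul_add, mul_div_cancel₀ _ hb.ne', Real.sin_add_pi]
  have hnonneg : ∀ x ∈ Ioc 0 (0 + π / b), 0 ≤ Real.sin (b * x) := fun x ⟨hx0, hxπ⟩ ↦ by
    rw [zero_add, le_div_iff₀' hb] at hxπ
    exact Real.sin_nonneg_of_nonneg_of_le_pi (by positivity) hxπ
  obtain rfl : c = 0 + n * (2 * (π / b)) := by
    rw [eq_div_of_mul_eq hb.ne' ((mul_comm _ _).trans hbc)]
    ring
  obtain ⟨hlower, hupper⟩ := integral_Ioi_add_periods_mul_antiperiodic_mem_Icc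
    (by positivity) hanti hnonneg (antitoneOn_rpow_mul_exp_neg_mul hα' hr.le)
    (integrableOn_rpow_mul_exp_neg_mul_mul_sin hα hr b) n
  rw [abs_of_nonneg hlower]
  exact hupper.trans
    ((le_abs_self _).trans (abs_integral_rpow_mul_exp_neg_mul_mul_sin_le hα hr hb))

lemma abs_one_div_mul_integral_rpow_mul_exp_neg_mul_mul_sin_le (hα : 0 < α) (hr : 0 < r)
    {g k : ℝ} (hg : 0 < g) (hk : 0 < k) :
    |1 / (k * π) * ∫ x in Ioi (0 : ℝ),
        x ^ (α - 1) * Real.exp (-r * x) * Real.sin (2 * π * k * g * x)|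
      ≤ Real.Gamma α / (π * (2 * π) ^ α) * (1 / k ^ (α + 1)) * g ^ (-α) := by
  rw [abs_mul, abs_of_pos (by positivity : 0 < 1 / (k * π))]
  calc 1 / (k * π) * |∫ x in Ioi (0 : ℝ),
        x ^ (α - 1) * Real.exp (-r * x) * Real.sin (2 * π * k * g * x)|
      ≤ 1 / (k * π) * (Real.Gamma α / (2 * π * k * g) ^ α) := by
        gcongr
        exact abs_integral_rpow_mul_exp_neg_mul_mul_sin_le hα hr (by positivity)
    _ = Real.Gamma α / (π * (2 * π) ^ α) * (1 / k ^ (α + 1)) * g ^ (-α) := by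
        rw [Real.mul_rpow (by positivity) hg.le, Real.mul_rpow (by positivity) hk.le,
          Real.rpow_add_one hk.ne', Real.rpow_neg hg.le]
        field_simp

end SineGammaIntegral

theorem oscillatory_gamma_integral_bounds_general (r g α : ℝ) (hr : 0 < r) (hg : 0 < g)
    (hα : 0 < α) :
    (α ≤ 1 → ∀ k : ℕ, 1 ≤ k →
      |∫ x in Set.Ioi (1 / g),
          x ^ (α - 1) * Real.exp (-r * x) * Real.sin (2 * Real.pi * k * g * x)|
        ≤ Real.Gamma α / (2 * Real.pi * k * g) ^ α) ∧
    Summable (fun k : ℕ =>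
      |(1 / (((k : ℝ) + 1) * Real.pi)) * ∫ x in Set.Ioi (0 : ℝ),
          x ^ (α - 1) * Real.exp (-r * x) *
            Real.sin (2 * Real.pi * ((k : ℝ) + 1) * g * x)|) ∧
    |∑' k : ℕ, (1 / (((k : ℝ) + 1) * Real.pi)) * ∫ x in Set.Ioi (0 : ℝ),
          x ^ (α - 1) * Real.exp (-r * x) *
            Real.sin (2 * Real.pi * ((k : ℝ) + 1) * g * x)|
      ≤ Real.Gamma α / (Real.pi * (2 * Real.pi) ^ α) *
          (∑' n : ℕ, 1 / ((n : ℝ) + 1) ^ (α + 1)) * g ^ (-α) := by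
  have hterm (k : ℕ) := abs_one_div_mul_integral_rpow_mul_exp_neg_mul_mul_sin_le hα hr hg
    (k := (k : ℝ) + 1) (by positivity)
  have hzeta : Summable fun n : ℕ ↦ 1 / ((n : ℝ) + 1) ^ (α + 1) := by
    refine ((Real.summable_one_div_nat_add_rpow 1 (α + 1)).2 (by linarith)).congr fun n ↦ ?_
    rw [abs_of_pos (by positivity)]
  have hmajorant := (hzeta.hasSum.mul_left (Real.Gamma α / (π * (2 * π) ^ α))).mul_right (g ^ (-α))
  refine ⟨fun hα' k hk ↦ ?_, ?_, ?_⟩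
  · have : (0 : ℝ) < k := Nat.cast_pos.2 hk
    exact abs_integral_Ioi_rpow_mul_exp_neg_mul_mul_sin_le hα hα' hr (by positivity) (n := k)
      (by field_simp)
  · exact hmajorant.summable.of_nonneg_of_le (fun _ ↦ abs_nonneg _) hterm
  · rw [← Real.norm_eq_abs]
    exact tsum_of_norm_bounded hmajorant hterm

/-- Oscillatory integral bound and summability: for `r > 1`, `g ≥ 1` and
`α ∈ (0,1)`, the truncated integral
`∫_{1/g}^∞ x^{α-1} e^{-rx} sin(2πkgx) dx` is bounded by `Γ(α)/(2πkg)^α` for each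
integer `k ≥ 1`; consequently the series
`Σ_{k≥1} (1/(kπ)) ∫_0^∞ x^{α-1} e^{-rx} sin(2πkgx) dx` converges absolutely and
its absolute value is at most `(Γ(α)/(π(2π)^α)) ζ(α+1) g^{-α}`. -/
theorem oscillatory_gamma_integral_bounds (r g α : ℝ) (hr : 1 < r) (hg : 1 ≤ g)
    (hα0 : 0 < α) (hα1 : α < 1) :
    (∀ k : ℕ, 1 ≤ k →
      |∫ x in Set.Ioi (1 / g),
          x ^ (α - 1) * Real.exp (-r * x) * Real.sin (2 * Real.pi * k * g * x)|
        ≤ Real.Gamma α / (2 * Real.pi * k * g) ^ α) ∧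
    Summable (fun k : ℕ =>
      |(1 / (((k : ℝ) + 1) * Real.pi)) * ∫ x in Set.Ioi (0 : ℝ),
          x ^ (α - 1) * Real.exp (-r * x) *
            Real.sin (2 * Real.pi * ((k : ℝ) + 1) * g * x)|) ∧
    |∑' k : ℕ, (1 / (((k : ℝ) + 1) * Real.pi)) * ∫ x in Set.Ioi (0 : ℝ),
          x ^ (α - 1) * Real.exp (-r * x) *
            Real.sin (2 * Real.pi * ((k : ℝ) + 1) * g * x)|
      ≤ Real.Gamma α / (Real.pi * (2 * Real.pi) ^ α) *
          (∑' n : ℕ, 1 / ((n : ℝ) + 1) ^ (α + 1)) * g ^ (-α) := by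
  have h := oscillatory_gamma_integral_bounds_general r g α (by linarith) (by linarith) hα0
  exact ⟨h.1 hα1.le, h.2⟩
end
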